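/- Let C ⊂ ℝ² be a centrally symmetric convex body and let H ⊂ ℝ² be a centrally symmetric convex hexagon or a parallelogram. Then there exists a full-rank lattice Λ ⊂ ℝ² such that the translates {C + λ : λ ∈ Λ} have pairwise disjoint interiors and covol(Λ) ≤ (C,H)² / |H|, where (C,H) := (|C+H| − |C| − |H|)/2 is the mixed area. (Equivalently, (C,H) ≥ √(|C| |H| / δ_L(C)) where δ_L(C) is the lattice packing density of C.) -/

import Mathlib

open MeasureTheory Pointwise

/-- The covolume of the full-rank lattice generated by the columns of `M`. -/
noncomputable def covol {n : ℕ} (M : Matrix (Fin n) (Fin n) ℝ) : ℝ := |M.det|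

/-- The set of points of the lattice generated by the columns of `M`. -/
def latticePoints {n : ℕ} (M : Matrix (Fin n) (Fin n) ℝ) : Set (Fin n → ℝ) :=
  {v | ∃ z : Fin n → ℤ, v = M.mulVec (fun i => (z i : ℝ))}

/-- `M` generates a full-rank lattice whose translates of `K` have pairwise
disjoint interiors. -/
def IsLatticePacking {n : ℕ} (M : Matrix (Fin n) (Fin n) ℝ)
    (K : Set (Fin n → ℝ)) : Prop :=
  M.det ≠ 0 ∧ ∀ l ∈ latticePoints M, ∀ l' ∈ latticePoints M, l ≠ l' →
    Disjoint (interior (l +ᵥ K)) (interior (l' +ᵥ K))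

/-- `H` is a centrally symmetric convex hexagon: the convex hull of six points
`A₁, …, A₆` with `A_{i+3} = -A_i`, not contained in a line. -/
def IsSymmHexagon (H : Set (Fin 2 → ℝ)) : Prop :=
  ∃ A : Fin 3 → (Fin 2 → ℝ),
    H = convexHull ℝ {A 0, A 1, A 2, -A 0, -A 1, -A 2} ∧ ¬ Collinear ℝ H

/-- `H` is a parallelogram: the convex hull of four points `B, B', -B, -B'`,
not contained in a line. -/
def IsParallelogram (H : Set (Fin 2 → ℝ)) : Prop :=
  ∃ B B' : Fin 2 → ℝ,
    H = convexHull ℝ {B, B', -B, -B'} ∧ ¬ Collinear ℝ H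

/-- The mixed area `(C, H) = (|C + H| - |C| - |H|) / 2` of two planar bodies,
where `C + H` is the Minkowski sum. -/
noncomputable def mixedArea (C H : Set (Fin 2 → ℝ)) : ℝ :=
  ((volume (C + H)).toReal - (volume C).toReal - (volume H).toReal) / 2

/-!
The body `H` is a sum of three centred segments `[-vᵢ, vᵢ]`. Adding them to `C` one at a time,
Fubini's theorem gives the Steiner-type formulas `(C, H) = ∑ wᵢ`, where `wᵢ` is the width of `C`
along `planeDet vᵢ`, and `|H| = 4 ∑_{i < j} |det (vᵢ, vⱼ)|`. A lattice packs `C` as soon as each of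
its nonzero vectors leaves one of the three strips, parallel to the `vᵢ`, of the widths of `C`.
Rescale the `vᵢ` so that they sum to zero: the rescaled widths `p, q, r` satisfy the triangle
inequalities, and writing them as `a + c, b + c, a + b` with `a, b, c ≥ 0` exhibits such a lattice
explicitly, with covolume proportional to the Lorentzian form
`2 (pq + qr + rp) - p² - q² - r² = 4 (ab + bc + ca)`. The required bound is then the reverse
Cauchy–Schwarz inequality for this form, and equality holds when the three widths of `C` are
proportional to those of `H`. When two of the `vᵢ` are parallel, two strips suffice and the bound is
the AM-GM inequality.
-/

open Bornology Metric Set Filter Topology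

section Width

variable {E : Type*} [NormedAddCommGroup E] [NormedSpace ℝ E] {K : Set E} {f g h : E →L[ℝ] ℝ}

/-- The width of `K` in the direction of a functional `f`: for convex and compact `K`, the length of
the interval `f(K)`. It is encoded by the diameter, so that no support function is needed; it is `0`
by convention when `f(K)` is unbounded. -/
noncomputable def width (K : Set E) (f : E →L[ℝ] ℝ) : ℝ := diam (f '' K)

lemma abs_map_sub_le_width (hK : IsBounded K) {x y : E} (hx : x ∈ K) (hy : y ∈ K) :
    |f x - f y| ≤ width K f :=
  dist_le_diam_of_mem (f.lipschitz.isBounded_image hK) (mem_image_of_mem f hx)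
    (mem_image_of_mem f hy)

lemma abs_map_sub_lt_width (hK : IsBounded K) (hf : f ≠ 0) {x y : E} (hx : x ∈ interior K)
    (hy : y ∈ K) : |f x - f y| < width K f := by
  obtain ⟨v, hv⟩ : ∃ v, 0 < f v := by
    obtain ⟨v, hv⟩ := DFunLike.ne_iff.1 hf
    rcases lt_or_gt_of_ne hv with hv | hv
    · exact ⟨-v, by simpa using hv⟩
    · exact ⟨v, hv⟩
  have mem_of_small (w : E) : ∀ᶠ t : ℝ in 𝓝[>] 0, x + t • w ∈ K := by
    have hcont : Tendsto (fun t : ℝ => x + t • w) (𝓝[>] 0) (𝓝 x) :=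
      Continuous.tendsto' (by fun_prop) 0 x (by simp) |>.mono_left nhdsWithin_le_nhds
    exact hcont (mem_interior_iff_mem_nhds.1 hx)
  obtain ⟨t, ⟨hpos, hneg⟩, ht⟩ :=
    (((mem_of_small v).and (mem_of_small (-v))).and self_mem_nhdsWithin).exists
  have htv : 0 < t * f v := mul_pos ht hv
  have hupper := (abs_le.1 (abs_map_sub_le_width (f := f) hK hpos hy)).2
  have hlower := (abs_le.1 (abs_map_sub_le_width (f := f) hK hneg hy)).1
  simp only [map_add, map_smul, map_neg, smul_eq_mul] at hupper hlower
  exact abs_lt.2 ⟨by linarith, by linarith⟩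

lemma width_pos (hK : IsBounded K) (hint : (interior K).Nonempty) (hf : f ≠ 0) :
    0 < width K f := by
  obtain ⟨x, hx⟩ := hint
  simpa using abs_map_sub_lt_width hK hf hx (interior_subset hx)

lemma width_smul (K : Set E) (c : ℝ) (f : E →L[ℝ] ℝ) : width K (c • f) = |c| * width K f := by
  have : ⇑(c • f) '' K = c • f '' K := by
    rw [← image_smul, image_image]; rfl
  rw [width, this, diam_smul₀, Real.norm_eq_abs, width]

lemma width_le_add_of_add_eq_zero (hK : IsBounded K) (hfgh : f + g + h = 0) :
    width K h ≤ width K f + width K g := by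
  refine diam_le_of_forall_dist_le (add_nonneg diam_nonneg diam_nonneg) ?_
  rintro _ ⟨x, hx, rfl⟩ _ ⟨y, hy, rfl⟩
  have happly (z : E) : h z = -(f z + g z) := by
    have hz : f z + g z + h z = 0 := DFunLike.congr_fun hfgh z
    linarith
  calc |h x - h y| = |(f x - f y) + (g x - g y)| := by rw [happly, happly, ← abs_neg]; ring_nf
    _ ≤ |f x - f y| + |g x - g y| := abs_add_le _ _
    _ ≤ width K f + width K g :=
      add_le_add (abs_map_sub_le_width hK hx hy) (abs_map_sub_le_width hK hx hy)

end Width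

lemma isLatticePacking_of_forall_exists_width_le {n : ℕ} {M : Matrix (Fin n) (Fin n) ℝ}
    {K : Set (Fin n → ℝ)} (hK : IsBounded K) (hM : M.det ≠ 0)
    (h : ∀ z : Fin n → ℤ, z ≠ 0 → ∃ f : (Fin n → ℝ) →L[ℝ] ℝ, f ≠ 0 ∧
      width K f ≤ |f (M.mulVec fun i => (z i : ℝ))|) :
    IsLatticePacking M K := by
  refine ⟨hM, ?_⟩
  rintro _ ⟨z, rfl⟩ _ ⟨w, rfl⟩ hne
  simp only [interior_vadd]
  rw [Set.disjoint_left]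
  rintro _ ⟨x, hx, rfl⟩ ⟨y, hy, hxy⟩
  obtain ⟨f, hf, hfle⟩ := h (z - w) (sub_ne_zero.2 fun hzw => hne (by rw [hzw]))
  have hdiff : M.mulVec (fun i => ((z - w) i : ℝ)) = y - x := by
    have : (fun i => ((z - w) i : ℝ)) = (fun i => (z i : ℝ)) - fun i => (w i : ℝ) := by
      ext i; simp
    rw [this, Matrix.mulVec_sub, sub_eq_sub_iff_add_eq_add, add_comm y]
    exact hxy.symm
  rw [hdiff, map_sub] at hfle
  exact hfle.not_gt (abs_map_sub_lt_width hK hf hy (interior_subset hx))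

section RealIntervals

variable {s t : Set ℝ}

lemma eq_Icc_of_isCompact_of_convex (hs : IsCompact s) (hs' : Convex ℝ s) (hne : s.Nonempty) :
    s = Icc (sInf s) (sSup s) :=
  eq_Icc_of_connected_compact ⟨hne, hs'.isPreconnected⟩ hs

lemma volume_real_eq_diam_of_convex (hs : IsCompact s) (hs' : Convex ℝ s) :
    volume.real s = diam s := by
  rcases s.eq_empty_or_nonempty with rfl | hne
  · simp
  have hle : sInf s ≤ sSup s := Real.sInf_le_sSup s hs.bddBelow hs.bddAbove
  rw [eq_Icc_of_isCompact_of_convex hs hs' hne, Real.diam_Icc hle, Real.volume_real_Icc_of_le hle]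

lemma volume_add_of_convex (hs : IsCompact s) (hs' : Convex ℝ s) (hsne : s.Nonempty)
    (ht : IsCompact t) (ht' : Convex ℝ t) (htne : t.Nonempty) :
    volume (s + t) = volume s + volume t := by
  have hle_s := Real.sInf_le_sSup s hs.bddBelow hs.bddAbove
  have hle_t := Real.sInf_le_sSup t ht.bddBelow ht.bddAbove
  rw [eq_Icc_of_isCompact_of_convex hs hs' hsne, eq_Icc_of_isCompact_of_convex ht ht' htne,
    Icc_add_Icc hle_s hle_t, Real.volume_Icc, Real.volume_Icc, Real.volume_Icc,
    ← ENNReal.ofReal_add (sub_nonneg.2 hle_s) (sub_nonneg.2 hle_t), add_sub_add_comm]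

end RealIntervals

section Steiner

lemma preimage_prodMk_add_singleton_prod {α β : Type*} [AddZeroClass α] [Add β]
    (K : Set (α × β)) (I : Set β) (x : α) :
    Prod.mk x ⁻¹' (K + {0} ×ˢ I) = Prod.mk x ⁻¹' K + I := by
  ext t
  constructor
  · rintro ⟨⟨y, r⟩, hy, ⟨w, u⟩, ⟨rfl : w = 0, hu⟩, hxt⟩
    simp only [Prod.mk_add_mk, add_zero, Prod.mk.injEq] at hxt
    obtain ⟨rfl, rfl⟩ := hxt
    exact add_mem_add hy hu
  · rintro ⟨r, hr, u, hu, rfl⟩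
    exact ⟨(x, r), hr, (0, u), ⟨rfl, hu⟩, by simp⟩

variable {E : Type*} [AddCommGroup E] [Module ℝ E] [TopologicalSpace E] [T2Space E]
  [ContinuousAdd E] [MeasurableSpace E] [OpensMeasurableSpace E]

lemma prod_volume_add_singleton_prod (μ : Measure E) [SFinite μ] {K : Set (E × ℝ)} {I : Set ℝ}
    (hK : IsCompact K) (hK' : Convex ℝ K) (hI : IsCompact I) (hI' : Convex ℝ I)
    (hIne : I.Nonempty) :
    (μ.prod volume) (K + {0} ×ˢ I) =
      (μ.prod volume) K + volume I * μ (Prod.fst '' K) := by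
  have hfst : MeasurableSet (Prod.fst '' K) := (hK.image continuous_fst).measurableSet
  have volume_slice_add (x : E) : volume (Prod.mk x ⁻¹' (K + ({0} : Set E) ×ˢ I)) =
      volume (Prod.mk x ⁻¹' K) + (Prod.fst '' K).indicator (fun _ => volume I) x := by
    rw [preimage_prodMk_add_singleton_prod]
    by_cases hx : x ∈ Prod.fst '' K
    · obtain ⟨⟨_, r⟩, hr, rfl⟩ := hx
      rw [indicator_of_mem (mem_image_of_mem _ hr)]
      refine volume_add_of_convex ?_ ?_ ⟨r, hr⟩ hI hI' hIne
      · refine (hK.image continuous_snd).of_isClosed_subset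
          (hK.isClosed.preimage (Continuous.prodMk_right _)) fun u hu => ⟨_, hu, rfl⟩
      · intro u hu w hw a b ha hb hab
        simpa [← add_smul, hab] using hK' hu hw ha hb hab
    · have hempty : Prod.mk x ⁻¹' K = ∅ :=
        eq_empty_of_forall_notMem fun r hr => hx ⟨_, hr, rfl⟩
      simp [hempty, hx]
  rw [Measure.prod_apply (hK.add (isCompact_singleton.prod hI)).measurableSet,
    Measure.prod_apply hK.measurableSet]
  simp only [volume_slice_add]
  rw [lintegral_add_right _ (measurable_const.indicator hfst), lintegral_indicator_const hfst]

end Steiner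

section SumSegments

variable {E : Type*} [NormedAddCommGroup E] [NormedSpace ℝ E] {ι : Type*} {K L : Set E}

lemma isCompact_segment (x y : E) : IsCompact (segment ℝ x y) := by
  rw [segment_eq_image_lineMap]
  exact isCompact_Icc.image AffineMap.lineMap_continuous

lemma width_add (hK : IsCompact K) (hK' : Convex ℝ K) (hKne : K.Nonempty) (hL : IsCompact L)
    (hL' : Convex ℝ L) (hLne : L.Nonempty) (f : E →L[ℝ] ℝ) :
    width (K + L) f = width K f + width L f := by
  have width_eq {S : Set E} (hS : IsCompact S) (hS' : Convex ℝ S) :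
      width S f = volume.real (f '' S) :=
    (volume_real_eq_diam_of_convex (hS.image f.continuous) (hS'.is_linear_image f.isLinear)).symm
  have hKf := hK.image f.continuous
  have hLf := hL.image f.continuous
  rw [width_eq (hK.add hL) (hK'.add hL'), width_eq hK hK', width_eq hL hL', image_add]
  rw [measureReal_def, volume_add_of_convex hKf (hK'.is_linear_image f.isLinear) (hKne.image f)
    hLf (hL'.is_linear_image f.isLinear) (hLne.image f),
    ENNReal.toReal_add hKf.measure_lt_top.ne hLf.measure_lt_top.ne]
  rfl

lemma width_segment_neg_self (a : E) (f : E →L[ℝ] ℝ) :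
    width (segment ℝ (-a) a) f = 2 * |f a| := by
  have himage : f '' segment ℝ (-a) a = segment ℝ (f (-a)) (f a) :=
    image_segment ℝ f.toLinearMap.toAffineMap (-a) a
  rw [width, himage, ← convexHull_pair, convexHull_diam, diam_pair, Real.dist_eq, map_neg,
    ← abs_neg, show -(-f a - f a) = 2 * f a by ring, abs_mul, abs_two]

lemma isCompact_sum_segment (s : Finset ι) (v : ι → E) :
    IsCompact (∑ i ∈ s, segment ℝ (-v i) (v i)) :=
  Finset.sum_induction _ IsCompact (fun _ _ => IsCompact.add) isCompact_singleton
    fun i _ => isCompact_segment (-v i) (v i)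

lemma width_add_sum_segment (hK : IsCompact K) (hK' : Convex ℝ K) (hKne : K.Nonempty)
    (s : Finset ι) (v : ι → E) (f : E →L[ℝ] ℝ) :
    width (K + ∑ i ∈ s, segment ℝ (-v i) (v i)) f = width K f + 2 * ∑ i ∈ s, |f (v i)| := by
  classical
  induction s using Finset.induction_on generalizing K with
  | empty => simp
  | insert k s hk ih =>
    have hadd := ih (hK.add (isCompact_segment (-v k) (v k))) (hK'.add (convex_segment _ _))
      (hKne.add ⟨_, left_mem_segment ℝ _ _⟩)
    rw [Finset.sum_insert hk, ← add_assoc, hadd, width_add hK hK' hKne (isCompact_segment _ _)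
      (convex_segment _ _) ⟨_, left_mem_segment ℝ _ _⟩, width_segment_neg_self,
      Finset.sum_insert hk]
    ring

end SumSegments

section Plane

/-- The determinant of two plane vectors as a continuous bilinear form; `planeDet a` serves as a
linear functional whose kernel is the line `ℝ a`, so that its values measure strips parallel to
`a`. -/
noncomputable def planeDet : (Fin 2 → ℝ) →L[ℝ] (Fin 2 → ℝ) →L[ℝ] ℝ :=
  (LinearMap.mk₂ ℝ (fun a x : Fin 2 → ℝ => a 0 * x 1 - a 1 * x 0)
    (fun _ _ _ => by simp only [Pi.add_apply]; ring)
    (fun _ _ _ => by simp only [Pi.smul_apply, smul_eq_mul]; ring)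
    (fun _ _ _ => by simp only [Pi.add_apply]; ring)
    (fun _ _ _ => by simp only [Pi.smul_apply, smul_eq_mul]; ring)).toContinuousBilinearMap

lemma planeDet_apply (a x : Fin 2 → ℝ) : planeDet a x = a 0 * x 1 - a 1 * x 0 := rfl

lemma planeDet_swap (a b : Fin 2 → ℝ) : planeDet b a = -planeDet a b := by
  simp only [planeDet_apply]; ring

lemma planeDet_self (a : Fin 2 → ℝ) : planeDet a a = 0 := by
  simp only [planeDet_apply]; ring

lemma planeDet_ne_zero {a : Fin 2 → ℝ} (ha : a ≠ 0) : planeDet a ≠ 0 := by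
  contrapose! ha
  have h0 := DFunLike.congr_fun ha ![0, 1]
  have h1 := DFunLike.congr_fun ha ![1, 0]
  ext i
  fin_cases i
  · simpa [planeDet_apply] using h0
  · simpa [planeDet_apply] using h1

lemma planeDet_smul_add_smul_add_smul (x y z : Fin 2 → ℝ) :
    planeDet y z • x + planeDet z x • y + planeDet x y • z = 0 := by
  ext i
  fin_cases i <;> simp [planeDet_apply] <;> ring

lemma exists_matrix_mulVec_eq_planeDet (u v : Fin 2 → ℝ) :
    ∃ N : Matrix (Fin 2) (Fin 2) ℝ, N.det = planeDet u v ∧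
      ∀ x, N.mulVec x = ![planeDet u x, planeDet v x] := by
  refine ⟨!![-u 1, u 0; -v 1, v 0], ?_, fun x => ?_⟩
  · rw [Matrix.det_fin_two_of, planeDet_apply]; ring
  · ext i
    fin_cases i <;> simp [planeDet_apply, Matrix.mulVec, dotProduct] <;> ring

lemma measurePreserving_prod_planeDet {u v : Fin 2 → ℝ} (huv : |planeDet u v| = 1) :
    MeasurePreserving ((planeDet u).prod (planeDet v)) := by
  obtain ⟨N, hN, hmulVec⟩ := exists_matrix_mulVec_eq_planeDet u v
  have hN0 : N.det ≠ 0 := by rw [hN, ← abs_pos, huv]; exact one_pos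
  have hN_mp : MeasurePreserving (Matrix.toLin' N) :=
    ⟨(LinearMap.continuous_of_finiteDimensional _).measurable, by
      rw [Real.map_matrix_volume_pi_eq_smul_volume_pi hN0, hN, abs_inv, huv]; simp⟩
  have hcoe : ⇑((planeDet u).prod (planeDet v)) =
      MeasurableEquiv.finTwoArrow ∘ Matrix.toLin' N := by
    funext x
    simp [hmulVec]
  exact hcoe ▸ (volume_preserving_finTwoArrow ℝ).comp hN_mp

lemma exists_measurePreserving_equiv_fst_eq_planeDet {a : Fin 2 → ℝ} (ha : a ≠ 0) :
    ∃ e : (Fin 2 → ℝ) ≃L[ℝ] ℝ × ℝ, MeasurePreserving e ∧ (∀ x, (e x).1 = planeDet a x) ∧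
      e a = (0, 1) := by
  obtain ⟨b, hab⟩ : ∃ b, planeDet a b = -1 :=
    LinearMap.surjective (f := (planeDet a).toLinearMap)
      (fun h => planeDet_ne_zero ha (ContinuousLinearMap.coe_injective h)) (-1)
  have hba : planeDet b a = 1 := by rw [planeDet_swap, hab, neg_neg]
  let toCoord : (Fin 2 → ℝ) →L[ℝ] ℝ × ℝ := (planeDet a).prod (planeDet b)
  let ofCoord : ℝ × ℝ →L[ℝ] (Fin 2 → ℝ) :=
    (ContinuousLinearMap.snd ℝ ℝ ℝ).smulRight a - (ContinuousLinearMap.fst ℝ ℝ ℝ).smulRight b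
  have hleft : Function.LeftInverse ofCoord toCoord := fun x => by
    change planeDet b x • a - planeDet a x • b = x
    have hcramer := planeDet_smul_add_smul_add_smul a b x
    rwa [hab, planeDet_swap a x, neg_smul, neg_one_smul, ← sub_eq_add_neg, ← sub_eq_add_neg,
      sub_eq_zero] at hcramer
  have hright : Function.RightInverse ofCoord toCoord := fun ⟨s, t⟩ => by
    change (planeDet a (t • a - s • b), planeDet b (t • a - s • b)) = (s, t)
    simp [planeDet_self, hab, hba]
  refine ⟨.equivOfInverse toCoord ofCoord hleft hright,
    measurePreserving_prod_planeDet (by simp [hab]), fun x => rfl, ?_⟩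
  change (planeDet a a, planeDet b a) = (0, 1)
  rw [planeDet_self, hba]

variable {ι : Type*} {K : Set (Fin 2 → ℝ)}

lemma volume_add_segment (hK : IsCompact K) (hK' : Convex ℝ K) (a : Fin 2 → ℝ) :
    volume (K + segment ℝ (-a) a) = volume K + 2 * volume (planeDet a '' K) := by
  rcases eq_or_ne a 0 with rfl | ha
  · have hzero : volume (planeDet 0 '' K) = 0 :=
      Set.Subsingleton.measure_zero
        (by rintro _ ⟨x, -, rfl⟩ _ ⟨y, -, rfl⟩; simp) _
    rw [neg_zero, segment_same, singleton_zero, add_zero, hzero, mul_zero, add_zero]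
  obtain ⟨e, he, he_fst, hea⟩ := exists_measurePreserving_equiv_fst_eq_planeDet ha
  have volume_image (S : Set (Fin 2 → ℝ)) : volume (e '' S) = volume S := by
    rw [← he.measure_preimage_emb e.toHomeomorph.measurableEmbedding (e '' S),
      preimage_image_eq _ e.injective]
  have himage : e '' segment ℝ (-a) a = {0} ×ˢ Icc (-1) 1 := by
    calc e '' segment ℝ (-a) a = segment ℝ (e (-a)) (e a) :=
          image_segment ℝ e.toLinearMap.toAffineMap (-a) a
      _ = Prod.mk 0 '' segment ℝ (-1) 1 := by
          rw [map_neg, hea, Prod.image_mk_segment_right, Prod.neg_mk, neg_zero]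
      _ = {0} ×ˢ Icc (-1) 1 := by rw [segment_eq_Icc (by simp), singleton_prod]
  have himage_fst : Prod.fst '' (e '' K) = planeDet a '' K := by
    simp only [image_image, he_fst]
  rw [← volume_image, ← volume_image K, image_add, himage, Measure.volume_eq_prod,
    prod_volume_add_singleton_prod volume (hK.image e.continuous)
      (hK'.is_linear_image e.toLinearMap.isLinear) isCompact_Icc (convex_Icc _ _) (by simp),
    himage_fst, Real.volume_Icc]
  norm_num

lemma volume_real_add_segment (hK : IsCompact K) (hK' : Convex ℝ K) (a : Fin 2 → ℝ) :
    volume.real (K + segment ℝ (-a) a) = volume.real K + 2 * width K (planeDet a) := by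
  have hKa : IsCompact (planeDet a '' K) := hK.image (planeDet a).continuous
  rw [width, ← volume_real_eq_diam_of_convex hKa (hK'.is_linear_image (planeDet a).isLinear)]
  simp only [measureReal_def]
  rw [volume_add_segment hK hK', ENNReal.toReal_add hK.measure_lt_top.ne
    (ENNReal.mul_ne_top (by simp) hKa.measure_lt_top.ne), ENNReal.toReal_mul]
  simp

lemma volume_real_add_sum_segment (hK : IsCompact K) (hK' : Convex ℝ K) (hKne : K.Nonempty)
    (s : Finset ι) (v : ι → Fin 2 → ℝ) :
    volume.real (K + ∑ i ∈ s, segment ℝ (-v i) (v i)) =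
      volume.real K + 2 * ∑ i ∈ s, width K (planeDet (v i)) +
        2 * ∑ i ∈ s, ∑ j ∈ s, |planeDet (v i) (v j)| := by
  classical
  induction s using Finset.induction_on with
  | empty => simp
  | insert k s hk ih =>
    have hsymm : ∑ i ∈ s, |planeDet (v i) (v k)| = ∑ i ∈ s, |planeDet (v k) (v i)| :=
      Finset.sum_congr rfl fun i _ => by rw [planeDet_swap, abs_neg]
    rw [Finset.sum_insert hk, add_comm (segment ℝ _ _), ← add_assoc,
      volume_real_add_segment (hK.add (isCompact_sum_segment s v))
        (hK'.add (convex_sum _ fun i _ => convex_segment _ _)),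
      width_add_sum_segment hK hK' hKne, ih]
    simp only [Finset.sum_insert hk, Finset.sum_add_distrib, planeDet_self, abs_zero, hsymm]
    ring

end Plane

section Zonotope

variable {E : Type*} [AddCommGroup E] [Module ℝ E] {ι : Type*} [Fintype ι]

/-- The zonotope with generators `v i`, encoded as a sum of centred segments, so that its vertices
are among the signed sums `∑ i, ± v i`. -/
def zonotope (v : ι → E) : Set E := ∑ i, segment ℝ (-v i) (v i)

lemma mem_zonotope {v : ι → E} {x : E} :
    x ∈ zonotope v ↔ ∃ c : ι → ℝ, (∀ i, |c i| ≤ 1) ∧ ∑ i, c i • v i = x := by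
  have segment_neg_self (a : E) : segment ℝ (-a) a = (fun c : ℝ => c • a) '' Icc (-1) 1 := by
    have himage := image_segment ℝ (LinearMap.toSpanSingleton ℝ E a).toAffineMap (-1) 1
    simpa [segment_eq_Icc] using himage.symm
  simp only [zonotope, Set.mem_fintype_sum, segment_neg_self, abs_le]
  constructor
  · rintro ⟨g, hg, rfl⟩
    choose c hc hcg using hg
    exact ⟨c, hc, Finset.sum_congr rfl fun i _ => hcg i⟩
  · rintro ⟨c, hc, rfl⟩
    exact ⟨fun i => c i • v i, fun i => ⟨c i, hc i, rfl⟩, rfl⟩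

lemma absConvex_zonotope (v : ι → E) : AbsConvex ℝ (zonotope v) := by
  have hconvex : Convex ℝ (zonotope v) := convex_sum _ fun i _ => convex_segment _ _
  refine ⟨(balanced_iff_neg_mem hconvex).2 fun x hx => ?_, hconvex⟩
  obtain ⟨c, hc, rfl⟩ := mem_zonotope.1 hx
  exact mem_zonotope.2 ⟨-c, by simpa using hc, by simp⟩

lemma zonotope_subset {v : ι → E} {K : Set E} (hK : Convex ℝ K)
    (h : ∀ u : ι → E, (∀ i, u i = -v i ∨ u i = v i) → ∑ i, u i ∈ K) : zonotope v ⊆ K := by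
  have hhull : zonotope v = convexHull ℝ (∑ i, {-v i, v i}) := by
    simp only [zonotope, convexHull_sum, convexHull_pair]
  rw [hhull]
  refine convexHull_min (fun x hx => ?_) hK
  obtain ⟨u, hu, rfl⟩ := (Set.mem_fintype_sum _ x).1 hx
  exact h u hu

end Zonotope

section PlanarZonotope

variable {ι : Type*} [Fintype ι]

lemma volume_real_zonotope (v : ι → Fin 2 → ℝ) :
    volume.real (zonotope v) = 2 * ∑ i, ∑ j, |planeDet (v i) (v j)| := by
  have hsum := volume_real_add_sum_segment isCompact_singleton (convex_singleton 0)
    (singleton_nonempty 0) Finset.univ v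
  simpa [width, zonotope, measureReal_def] using hsum

lemma mixedArea_zonotope {K : Set (Fin 2 → ℝ)} (hK : IsCompact K) (hK' : Convex ℝ K)
    (hKne : K.Nonempty) (v : ι → Fin 2 → ℝ) :
    mixedArea K (zonotope v) = ∑ i, width K (planeDet (v i)) := by
  simp only [mixedArea, ← measureReal_def]
  rw [volume_real_zonotope, zonotope, volume_real_add_sum_segment hK hK' hKne]
  ring

end PlanarZonotope

section SymmetricHull

variable {E : Type*} [AddCommGroup E] [Module ℝ E]

lemma sum_smul_mem_of_absConvex {ι : Type*} {S : Set E} (hS : AbsConvex ℝ S) (hne : S.Nonempty)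
    {s : Finset ι} {c : ι → ℝ} {x : ι → E} (hx : ∀ i ∈ s, x i ∈ S) (hc : ∑ i ∈ s, |c i| ≤ 1) :
    ∑ i ∈ s, c i • x i ∈ S := by
  set τ := ∑ i ∈ s, |c i|
  rcases (Finset.sum_nonneg fun i _ => abs_nonneg (c i) : 0 ≤ τ).eq_or_lt with hzero | hpos
  · have hc0 : ∀ i ∈ s, c i • x i = 0 := fun i hi => by
      rw [abs_eq_zero.1 ((Finset.sum_eq_zero_iff_of_nonneg fun i _ => abs_nonneg (c i)).1
        hzero.symm i hi), zero_smul]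
    rw [Finset.sum_eq_zero hc0]
    exact hS.1.zero_mem hne
  · have hsigned : ∀ i ∈ s, (SignType.sign (c i) : ℝ) • x i ∈ S := fun i hi =>
      hS.1.smul_mem (by rcases lt_trichotomy (c i) 0 with h | h | h <;> simp [h]) (hx i hi)
    have hmean : ∑ i ∈ s, (|c i| / τ) • (SignType.sign (c i) : ℝ) • x i ∈ S :=
      hS.2.sum_mem (fun i _ => by positivity) (by rw [← Finset.sum_div, div_self hpos.ne'])
        hsigned
    convert hS.1.smul_mem (by rwa [Real.norm_of_nonneg hpos.le]) hmean using 1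
    rw [Finset.smul_sum]
    refine Finset.sum_congr rfl fun i _ => ?_
    rw [smul_smul, smul_smul, mul_div_cancel₀ _ hpos.ne', mul_comm, sign_mul_abs]

lemma absConvexHull_range_smul {ι : Type*} (A : ι → E) {c : ι → ℝ} (hc : ∀ i, |c i| = 1) :
    absConvexHull ℝ (range fun i => c i • A i) = absConvexHull ℝ (range A) := by
  have smul_subset (B : ι → E) :
      absConvexHull ℝ (range fun i => c i • B i) ⊆ absConvexHull ℝ (range B) := by
    refine absConvexHull_min ?_ absConvex_absConvexHull
    rintro _ ⟨i, rfl⟩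
    exact balanced_absConvexHull.smul_mem (hc i).le (subset_absConvexHull ⟨i, rfl⟩)
  refine (smul_subset A).antisymm ?_
  have hsq (i : ι) : c i * c i = 1 := by rw [← abs_mul_abs_self, hc, one_mul]
  simpa [smul_smul, hsq] using smul_subset fun i => c i • A i

lemma absConvexHull_range_eq_image_compl {ι : Type*} [Fintype ι] [Nontrivial ι] {A : ι → E}
    {g : ι → ℝ} {i : ι} (hi : ∑ j, |g j| ≤ 2 * |g i|) (hgi : g i ≠ 0) (hA : ∑ j, g j • A j = 0) :
    absConvexHull ℝ (range A) = absConvexHull ℝ (A '' {i}ᶜ) := by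
  classical
  refine (absConvexHull_min ?_ absConvex_absConvexHull).antisymm
    (absConvexHull_mono (image_subset_range A _))
  have mem_of_ne {j : ι} (hj : j ≠ i) : A j ∈ absConvexHull ℝ (A '' {i}ᶜ) :=
    subset_absConvexHull (mem_image_of_mem A hj)
  have hAi : ∑ j ∈ Finset.univ.erase i, (-g j / g i) • A j = A i := by
    have hrest : g i • A i + ∑ j ∈ Finset.univ.erase i, g j • A j = 0 := by
      rwa [Finset.add_sum_erase _ (fun j => g j • A j) (Finset.mem_univ i)]
    simp only [div_eq_inv_mul, mul_smul, neg_smul, ← Finset.smul_sum, Finset.sum_neg_distrib]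
    rw [← eq_neg_of_add_eq_zero_left hrest, inv_smul_smul₀ hgi]
  have hcoeff : ∑ j ∈ Finset.univ.erase i, |-g j / g i| ≤ 1 := by
    have hsum := Finset.add_sum_erase _ (fun j => |g j|) (Finset.mem_univ i)
    simp only [abs_div, abs_neg, ← Finset.sum_div]
    rw [div_le_one (abs_pos.2 hgi)]
    linarith
  rintro _ ⟨j, rfl⟩
  by_cases hj : j = i
  · obtain ⟨k, hk⟩ := exists_ne i
    rw [hj, ← hAi]
    exact sum_smul_mem_of_absConvex absConvex_absConvexHull ⟨_, mem_of_ne hk⟩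
      (fun j hj => mem_of_ne (Finset.ne_of_mem_erase hj)) hcoeff
  · exact mem_of_ne hj

lemma sum_mem_absConvexHull_of_sum_smul_eq_zero {A : Fin 3 → E} {g : Fin 3 → ℝ}
    (hsum : ∑ i, g i = 1) (hle : ∀ i, g i ≤ 1 / 2) (hA : ∑ i, g i • A i = 0) :
    ∑ i, A i ∈ absConvexHull ℝ (range A) := by
  have hmem : ∑ i, (1 - 2 * g i) • A i ∈ absConvexHull ℝ (range A) :=
    convex_absConvexHull.sum_mem (fun i _ => by linarith [hle i])
      (by rw [Finset.sum_sub_distrib, ← Finset.mul_sum, hsum]; norm_num)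
      fun i _ => subset_absConvexHull ⟨i, rfl⟩
  simpa only [sub_smul, one_smul, mul_smul, Finset.sum_sub_distrib, ← Finset.smul_sum, hA,
    smul_zero, sub_zero] using hmem

-- `A i = v i - v (i + 1) + v (i + 2)` for the generators `v i = (A i + A (i + 1)) / 2`; the other
-- signed sums of the `v i` are the `-A i` and `±∑ i, A i`.
lemma absConvexHull_range_eq_zonotope {A : Fin 3 → E} {g : Fin 3 → ℝ}
    (hsum : ∑ i, g i = 1) (hle : ∀ i, g i ≤ 1 / 2) (hA : ∑ i, g i • A i = 0) :
    absConvexHull ℝ (range A) = zonotope fun i => (1 / 2 : ℝ) • (A i + A (i + 1)) := by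
  have hvertex (i : Fin 3) : A i ∈ absConvexHull ℝ (range A) := subset_absConvexHull ⟨i, rfl⟩
  have hneg {x : E} (hx : x ∈ absConvexHull ℝ (range A)) : -x ∈ absConvexHull ℝ (range A) :=
    balanced_absConvexHull.neg_mem_iff.2 hx
  have hcentre : A 0 + A 1 + A 2 ∈ absConvexHull ℝ (range A) := by
    rw [← Fin.sum_univ_three]
    exact sum_mem_absConvexHull_of_sum_smul_eq_zero hsum hle hA
  refine (absConvexHull_min ?_ (absConvex_zonotope _)).antisymm
    (zonotope_subset convex_absConvexHull fun u hu => ?_)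
  · rintro _ ⟨i, rfl⟩
    refine mem_zonotope.2 ⟨fun j => if j = i + 1 then -1 else 1, fun j => ?_, ?_⟩
    · dsimp only
      split_ifs <;> simp
    · fin_cases i <;> simp [Fin.sum_univ_three] <;> module
  · have hone : (1 : Fin 3) + 1 = 2 := rfl
    have htwo : (2 : Fin 3) + 1 = 0 := rfl
    rw [Fin.sum_univ_three]
    rcases hu 0 with h0 | h0 <;> rcases hu 1 with h1 | h1 <;> rcases hu 2 with h2 | h2 <;>
      rw [h0, h1, h2, zero_add, hone, htwo]
    · convert hneg hcentre using 1; module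
    · convert hneg (hvertex 1) using 1; module
    · convert hneg (hvertex 0) using 1; module
    · convert hvertex 2 using 1; module
    · convert hneg (hvertex 2) using 1; module
    · convert hvertex 0 using 1; module
    · convert hvertex 1 using 1; module
    · convert hcentre using 1; module

lemma exists_absConvexHull_pair_eq_zonotope (B C : E) :
    ∃ v : Fin 3 → E, absConvexHull ℝ {B, C} = zonotope v := by
  have hrange : absConvexHull ℝ (range ![B, C, -C]) = absConvexHull ℝ {B, C} := by
    refine (absConvexHull_min ?_ absConvex_absConvexHull).antisymm (absConvexHull_mono ?_)
    · rintro _ ⟨i, rfl⟩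
      have hB : B ∈ absConvexHull ℝ {B, C} := subset_absConvexHull (by simp)
      have hC : C ∈ absConvexHull ℝ {B, C} := subset_absConvexHull (by simp)
      fin_cases i
      exacts [hB, hC, balanced_absConvexHull.neg_mem_iff.2 hC]
    · rintro x (rfl | rfl)
      exacts [⟨0, rfl⟩, ⟨1, rfl⟩]
  rw [← hrange]
  exact ⟨_, absConvexHull_range_eq_zonotope (g := ![0, 1 / 2, 1 / 2])
    (by simp only [Fin.sum_univ_three, Matrix.cons_val]; norm_num)
    (fun i => by fin_cases i <;> norm_num) (by simp [Fin.sum_univ_three])⟩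

lemma exists_absConvexHull_range_eq_zonotope {A : Fin 3 → E} (hA : ¬ LinearIndependent ℝ A) :
    ∃ v : Fin 3 → E, absConvexHull ℝ (range A) = zonotope v := by
  obtain ⟨g, hgA, i, hi⟩ := Fintype.not_linearIndependent_iff.1 hA
  have hpos : 0 < ∑ j, |g j| :=
    Finset.sum_pos' (fun j _ => abs_nonneg _) ⟨i, Finset.mem_univ i, abs_pos.2 hi⟩
  by_cases hlarge : ∃ k, ∑ j, |g j| < 2 * |g k|
  · obtain ⟨k, hk⟩ := hlarge
    have hgk : g k ≠ 0 := abs_pos.1 (by linarith)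
    have hcompl : ({k}ᶜ : Set (Fin 3)) = {k + 1, k + 2} := by
      ext j
      clear * -
      decide +revert
    rw [absConvexHull_range_eq_image_compl hk.le hgk hgA, hcompl, image_pair]
    exact exists_absConvexHull_pair_eq_zonotope _ _
  push Not at hlarge
  let c : Fin 3 → ℝ := fun j => if 0 ≤ g j then 1 else -1
  have hc (j : Fin 3) : |c j| = 1 := by simp only [c]; split_ifs <;> simp
  have hgc (j : Fin 3) : |g j| * c j = g j := by
    simp only [c]
    split_ifs with hj
    · rw [abs_of_nonneg hj, mul_one]
    · rw [abs_of_neg (not_le.1 hj), neg_mul_neg, mul_one]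
  rw [← absConvexHull_range_smul A hc]
  refine ⟨_, absConvexHull_range_eq_zonotope (g := fun j => |g j| / ∑ j, |g j|) ?_ ?_ ?_⟩
  · rw [← Finset.sum_div, div_self hpos.ne']
  · intro j
    rw [div_le_iff₀ hpos]
    linarith [hlarge j]
  · simp only [smul_smul, div_mul_eq_mul_div, hgc]
    simp only [div_eq_inv_mul, mul_smul, ← Finset.smul_sum, hgA, smul_zero]

end SymmetricHull

lemma IsSymmHexagon.exists_eq_zonotope {H : Set (Fin 2 → ℝ)} (hH : IsSymmHexagon H) :
    ∃ v : Fin 3 → Fin 2 → ℝ, H = zonotope v := by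
  obtain ⟨A, rfl, -⟩ := hH
  have hdep : ¬ LinearIndependent ℝ A := fun h => by
    simpa using h.fintype_card_le_finrank
  have hvertices : {A 0, A 1, A 2, -A 0, -A 1, -A 2} = range A ∪ -range A := by
    ext x
    simp [Fin.exists_fin_succ, or_assoc, eq_comm, eq_neg_iff_add_eq_zero, add_comm]
  rw [hvertices, convexHull_union_neg_eq_absConvexHull]
  exact exists_absConvexHull_range_eq_zonotope hdep

lemma IsParallelogram.exists_eq_zonotope {H : Set (Fin 2 → ℝ)} (hH : IsParallelogram H) :
    ∃ v : Fin 3 → Fin 2 → ℝ, H = zonotope v := by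
  obtain ⟨B, B', rfl, -⟩ := hH
  have hvertices : ({B, B', -B, -B'} : Set (Fin 2 → ℝ)) = {B, B'} ∪ -{B, B'} := by
    simp only [neg_insert, neg_singleton, insert_union, singleton_union]
  rw [hvertices, convexHull_union_neg_eq_absConvexHull]
  exact exists_absConvexHull_pair_eq_zonotope B B'

lemma interior_nonempty_of_not_collinear {E : Type*} [NormedAddCommGroup E] [NormedSpace ℝ E]
    (hE : Module.finrank ℝ E = 2) {H : Set E} (hH : Convex ℝ H) (hcol : ¬ Collinear ℝ H) :
    (interior H).Nonempty := by
  have : FiniteDimensional ℝ E := .of_finrank_pos (by omega)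
  have hne : H.Nonempty := nonempty_iff_ne_empty.2 fun h => hcol (h ▸ collinear_empty ℝ E)
  rw [hH.interior_nonempty_iff_affineSpan_eq_top,
    AffineSubspace.affineSpan_eq_top_iff_vectorSpan_eq_top_of_nonempty ℝ E E hne]
  rw [collinear_iff_finrank_le_one] at hcol
  exact Submodule.eq_top_of_finrank_eq
    ((Submodule.finrank_le _).antisymm (by omega))

lemma volume_real_pos_of_not_collinear {H : Set (Fin 2 → ℝ)} (hH : IsCompact H)
    (hH' : Convex ℝ H) (hcol : ¬ Collinear ℝ H) : 0 < volume.real H := by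
  have hint := interior_nonempty_of_not_collinear (Module.finrank_fin_fun ℝ) hH' hcol
  exact ENNReal.toReal_pos (Measure.measure_pos_of_nonempty_interior volume hint).ne'
    hH.measure_lt_top.ne

section LatticeConstruction

variable {K : Set (Fin 2 → ℝ)} {u v w x y z : Fin 2 → ℝ}

lemma exists_matrix_planeDet_mulVec (huv : planeDet u v ≠ 0) (W : Matrix (Fin 2) (Fin 2) ℝ) :
    ∃ M : Matrix (Fin 2) (Fin 2) ℝ, planeDet u v * M.det = W.det ∧ ∀ t,
      planeDet u (M.mulVec t) = W.mulVec t 0 ∧ planeDet v (M.mulVec t) = W.mulVec t 1 := by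
  obtain ⟨N, hN, hmulVec⟩ := exists_matrix_mulVec_eq_planeDet u v
  have hunit : IsUnit N.det := by rw [hN]; exact huv.isUnit
  have hmul : N * (N⁻¹ * W) = W := Matrix.mul_nonsing_inv_cancel_left _ _ hunit
  refine ⟨N⁻¹ * W, by rw [← hN, ← Matrix.det_mul, hmul], fun t => ?_⟩
  have ht : W.mulVec t = ![planeDet u ((N⁻¹ * W).mulVec t), planeDet v ((N⁻¹ * W).mulVec t)] := by
    rw [← hmulVec, Matrix.mulVec_mulVec, hmul]
  simp [ht]

lemma planeDet_ne_zero_of_apply_ne_zero (h : planeDet u v ≠ 0) :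
    planeDet u ≠ 0 ∧ planeDet v ≠ 0 := by
  refine ⟨fun hu => h (by rw [hu]; rfl), fun hv => h ?_⟩
  rw [planeDet_swap, hv]
  simp

lemma planeDet_apply_of_add_eq_zero (huvw : u + v + w = 0) (x : Fin 2 → ℝ) :
    planeDet w x = -(planeDet u x + planeDet v x) := by
  rw [eq_neg_of_add_eq_zero_right huvw, map_neg, map_add]; rfl

lemma planeDet_ne_zero_of_add_eq_zero (huvw : u + v + w = 0) (huv : planeDet u v ≠ 0) :
    planeDet w ≠ 0 := fun hw => huv <| by
  simpa [hw, planeDet_self] using planeDet_apply_of_add_eq_zero huvw v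

lemma exists_isLatticePacking_covol_eq_width_mul_width (hK : IsBounded K)
    (hint : (interior K).Nonempty) (huv : planeDet u v ≠ 0) :
    ∃ M, IsLatticePacking M K ∧
      |planeDet u v| * covol M = width K (planeDet u) * width K (planeDet v) := by
  obtain ⟨hu, hv⟩ := planeDet_ne_zero_of_apply_ne_zero huv
  set p := width K (planeDet u)
  set q := width K (planeDet v)
  have hp : 0 < p := width_pos hK hint hu
  have hq : 0 < q := width_pos hK hint hv
  obtain ⟨M, hdet, hM⟩ := exists_matrix_planeDet_mulVec huv !![p, 0; 0, q]
  rw [Matrix.det_fin_two_of, mul_zero, sub_zero] at hdet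
  have le_mul_abs {r : ℝ} (hr : 0 < r) {k : ℤ} (hk : k ≠ 0) : r ≤ |r * k| := by
    rw [abs_mul, abs_of_pos hr]
    exact le_mul_of_one_le_right hr.le (by exact_mod_cast Int.one_le_abs hk)
  refine ⟨M, isLatticePacking_of_forall_exists_width_le hK ?_ fun t ht => ?_, ?_⟩
  · exact right_ne_zero_of_mul (hdet ▸ (mul_pos hp hq).ne')
  · obtain ⟨i, hi⟩ := Function.ne_iff.1 ht
    obtain ⟨hMu, hMv⟩ := hM fun i => (t i : ℝ)
    fin_cases i
    · exact ⟨_, hu, by rw [hMu]; simpa [Matrix.mulVec, dotProduct] using le_mul_abs hp hi⟩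
    · exact ⟨_, hv, by rw [hMv]; simpa [Matrix.mulVec, dotProduct] using le_mul_abs hq hi⟩
  · rw [covol, ← abs_mul, hdet, abs_of_pos (mul_pos hp hq)]

lemma add_le_abs_of_ne_zero {a b c : ℝ} (ha : 0 ≤ a) (hb : 0 ≤ b) (hc : 0 ≤ c) {m n : ℤ}
    (hmn : m ≠ 0 ∨ n ≠ 0) :
    a + c ≤ |(a + c) * m - c * n| ∨ b + c ≤ |(b + c) * n - c * m| ∨ a + b ≤ |a * m + b * n| := by
  wlog hm : 0 ≤ m generalizing m n
  · have hneg := this (m := -m) (n := -n) (by simpa using hmn) (by omega)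
    simp only [Int.cast_neg, mul_neg, sub_neg_eq_add, neg_add_eq_sub] at hneg
    rwa [abs_sub_comm (c * n), abs_sub_comm (c * m), ← neg_add', abs_neg, add_comm (b * _)] at hneg
  have one_le_cast {k : ℤ} (hk : 0 < k) : (1 : ℝ) ≤ k := by exact_mod_cast hk
  rcases hm.eq_or_lt with rfl | hm
  · right; left
    rw [Int.cast_zero, mul_zero, sub_zero, abs_mul, abs_of_nonneg (add_nonneg hb hc)]
    exact le_mul_of_one_le_right (add_nonneg hb hc)
      (by exact_mod_cast Int.one_le_abs (hmn.resolve_left (by simp)))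
  · have hm' := one_le_cast hm
    rcases le_or_gt n 0 with hn | hn
    · have hn' : (n : ℝ) ≤ 0 := by exact_mod_cast hn
      exact .inl (le_abs.2 (.inl (by nlinarith)))
    · have hn' := one_le_cast hn
      exact .inr (.inr (le_abs.2 (.inl (by nlinarith))))

lemma exists_isLatticePacking_of_width_eq_add (hK : IsBounded K) (huvw : u + v + w = 0)
    (huv : planeDet u v ≠ 0) {a b c : ℝ} (ha : 0 ≤ a) (hb : 0 ≤ b) (hc : 0 ≤ c)
    (habc : 0 < a * b + b * c + c * a) (hu : width K (planeDet u) = a + c)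
    (hv : width K (planeDet v) = b + c) (hw : width K (planeDet w) = a + b) :
    ∃ M, IsLatticePacking M K ∧ |planeDet u v| * covol M = a * b + b * c + c * a := by
  have hw_apply := planeDet_apply_of_add_eq_zero huvw
  obtain ⟨hu0, hv0⟩ := planeDet_ne_zero_of_apply_ne_zero huv
  have hw0 := planeDet_ne_zero_of_add_eq_zero huvw huv
  obtain ⟨M, hdet, hM⟩ := exists_matrix_planeDet_mulVec huv !![a + c, -c; -c, b + c]
  replace hdet : planeDet u v * M.det = a * b + b * c + c * a := by
    rw [hdet, Matrix.det_fin_two_of]; ring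
  refine ⟨M, isLatticePacking_of_forall_exists_width_le hK ?_ fun t ht => ?_, ?_⟩
  · exact right_ne_zero_of_mul (hdet ▸ habc.ne')
  · have ht' : t 0 ≠ 0 ∨ t 1 ≠ 0 := by
      simpa [Fin.exists_fin_two] using Function.ne_iff.1 ht
    obtain ⟨hMu, hMv⟩ := hM fun i => (t i : ℝ)
    simp only [Matrix.mulVec, dotProduct, Matrix.of_apply, Matrix.cons_val, Fin.sum_univ_two,
      neg_mul] at hMu hMv
    rcases add_le_abs_of_ne_zero ha hb hc ht' with h | h | h
    · exact ⟨planeDet u, hu0, by rw [hu]; convert h using 2; linear_combination hMu⟩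
    · exact ⟨planeDet v, hv0, by rw [hv]; convert h using 2; linear_combination hMv⟩
    · refine ⟨planeDet w, hw0, ?_⟩
      rw [hw, hw_apply, abs_neg]
      convert h using 2
      linear_combination hMu + hMv
  · rw [covol, ← abs_mul, hdet, abs_of_pos habc]

lemma exists_isLatticePacking_covol_eq_of_add_eq_zero (hK : IsBounded K)
    (hint : (interior K).Nonempty) (huvw : u + v + w = 0) (huv : planeDet u v ≠ 0) {p q r : ℝ}
    (hp : width K (planeDet u) = p) (hq : width K (planeDet v) = q)
    (hr : width K (planeDet w) = r) :
    ∃ M, IsLatticePacking M K ∧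
      4 * |planeDet u v| * covol M = 4 * p * q - (p + q - r) ^ 2 := by
  have hsum : planeDet u + planeDet v + planeDet w = 0 := by
    rw [← map_add, ← map_add, huvw, map_zero]
  obtain ⟨a, b, c, rfl, rfl, rfl⟩ :
      ∃ a b c : ℝ, p = a + c ∧ q = b + c ∧ r = a + b :=
    ⟨(p + r - q) / 2, (q + r - p) / 2, (p + q - r) / 2, by ring, by ring, by ring⟩
  have ha : 0 ≤ a := by
    linarith [width_le_add_of_add_eq_zero hK (add_right_comm _ (planeDet v) _ ▸ hsum)]
  have hb : 0 ≤ b := by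
    linarith [width_le_add_of_add_eq_zero hK (add_rotate (planeDet u) _ _ ▸ hsum)]
  have hc : 0 ≤ c := by linarith [width_le_add_of_add_eq_zero hK hsum]
  have habc : 0 < a * b + b * c + c * a := by
    obtain ⟨hu0, hv0⟩ := planeDet_ne_zero_of_apply_ne_zero huv
    have hp_pos : 0 < a + c := hp ▸ width_pos hK hint hu0
    have hq_pos : 0 < b + c := hq ▸ width_pos hK hint hv0
    have hr_pos : 0 < a + b := hr ▸ width_pos hK hint (planeDet_ne_zero_of_add_eq_zero huvw huv)
    rcases hc.eq_or_lt with rfl | hc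
    · have hab : 0 < a * b := by simpa using mul_pos hp_pos hq_pos
      linarith
    · have hpos : 0 < c * (a + b) := mul_pos hc hr_pos
      linarith [mul_nonneg ha hb]
  obtain ⟨M, hM, hcovol⟩ :=
    exists_isLatticePacking_of_width_eq_add hK huvw huv ha hb hc habc hp hq hr
  refine ⟨M, hM, ?_⟩
  rw [mul_assoc, hcovol]
  ring

-- The reverse Cauchy–Schwarz inequality for the Lorentzian form `2 (pq + qr + rp) - p² - q² - r²`,
-- with equality when `x : y : z = (b + c) : (c + a) : (a + b)`.
lemma four_mul_mul_sub_sq_mul_add_le {a b c : ℝ} (ha : 0 < a) (hb : 0 < b) (hc : 0 < c)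
    (x y z : ℝ) :
    (4 * (a * x) * (b * y) - (a * x + b * y - c * z) ^ 2) * (a + b + c) ≤
      (x + y + z) ^ 2 * (a * b * c) := by
  have hsos : a * (a + b) * (a + c) * ((x + y + z) ^ 2 * (a * b * c) -
      (4 * (a * x) * (b * y) - (a * x + b * y - c * z) ^ 2) * (a + b + c)) =
      (a * (a + b) * (a + c) * x - a * b * (a + b) * y - a * c * (a + c) * z) ^ 2 +
        a * b * c * (a + b + c) * ((a + b) * y - (a + c) * z) ^ 2 := by
    ring
  rw [← sub_nonneg]
  have hfactor : 0 < a * (a + b) * (a + c) := by positivity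
  exact nonneg_of_mul_nonneg_right (hsos ▸ by positivity) hfactor

lemma exists_isLatticePacking_covol_mul_le_of_planeDet_eq_zero (hK : IsBounded K)
    (hint : (interior K).Nonempty) (hxy : planeDet x y ≠ 0) (hyz : planeDet y z = 0) :
    ∃ M, IsLatticePacking M K ∧
      covol M * (4 * (|planeDet x y| + |planeDet y z| + |planeDet z x|)) ≤
        (width K (planeDet x) + width K (planeDet y) + width K (planeDet z)) ^ 2 := by
  obtain ⟨M, hM, hcovol⟩ := exists_isLatticePacking_covol_eq_width_mul_width hK hint hxy
  refine ⟨M, hM, ?_⟩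
  have hwidth : |planeDet x y| * width K (planeDet z) =
      |planeDet z x| * width K (planeDet y) := by
    have hrel := planeDet_smul_add_smul_add_smul x y z
    rw [hyz, zero_smul, zero_add] at hrel
    rw [← width_smul, ← width_smul, ← map_smul, ← map_smul, eq_neg_of_add_eq_zero_right hrel,
      ← neg_smul, map_smul, width_smul, abs_neg, map_smul, width_smul]
  have hy : 0 < width K (planeDet y) :=
    width_pos hK hint (planeDet_ne_zero_of_apply_ne_zero hxy).2
  have hcovol' : |planeDet z x| * covol M = width K (planeDet x) * width K (planeDet z) := by
    refine mul_right_cancel₀ hy.ne' ?_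
    linear_combination -covol M * hwidth + width K (planeDet z) * hcovol
  rw [hyz, abs_zero]
  calc covol M * (4 * (|planeDet x y| + 0 + |planeDet z x|)) =
        4 * (|planeDet x y| * covol M + |planeDet z x| * covol M) := by ring
    _ = 4 * width K (planeDet x) * (width K (planeDet y) + width K (planeDet z)) := by
        rw [hcovol, hcovol']; ring
    _ ≤ (width K (planeDet x) + (width K (planeDet y) + width K (planeDet z))) ^ 2 :=
        four_mul_le_sq_add _ _
    _ = _ := by ring

lemma exists_isLatticePacking_covol_mul_le_of_planeDet_ne_zero (hK : IsBounded K)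
    (hint : (interior K).Nonempty) (hxy : planeDet x y ≠ 0) (hyz : planeDet y z ≠ 0)
    (hzx : planeDet z x ≠ 0) :
    ∃ M, IsLatticePacking M K ∧
      covol M * (4 * (|planeDet x y| + |planeDet y z| + |planeDet z x|)) ≤
        (width K (planeDet x) + width K (planeDet y) + width K (planeDet z)) ^ 2 := by
  have ha := abs_pos.2 hyz
  have hb := abs_pos.2 hzx
  have hc := abs_pos.2 hxy
  have width_smul_eq (c : ℝ) (t : Fin 2 → ℝ) :
      width K (planeDet (c • t)) = |c| * width K (planeDet t) := by
    rw [map_smul, width_smul]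
  have hdet : planeDet (planeDet y z • x) (planeDet z x • y) =
      planeDet y z * planeDet z x * planeDet x y := by
    simp only [map_smul, smul_apply, smul_eq_mul]; ring
  obtain ⟨M, hM, hcovol⟩ := exists_isLatticePacking_covol_eq_of_add_eq_zero hK hint
    (planeDet_smul_add_smul_add_smul x y z)
    (hdet ▸ mul_ne_zero (mul_ne_zero hyz hzx) hxy)
    (width_smul_eq _ x) (width_smul_eq _ y) (width_smul_eq _ z)
  refine ⟨M, hM, ?_⟩
  have hle := four_mul_mul_sub_sq_mul_add_le ha hb hc
    (width K (planeDet x)) (width K (planeDet y)) (width K (planeDet z))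
  rw [← hcovol, hdet, abs_mul, abs_mul] at hle
  refine le_of_mul_le_mul_right ?_ (mul_pos (mul_pos ha hb) hc)
  linarith

lemma exists_isLatticePacking_covol_mul_le (hK : IsBounded K) (hint : (interior K).Nonempty)
    (hxy : planeDet x y ≠ 0) (z : Fin 2 → ℝ) :
    ∃ M, IsLatticePacking M K ∧
      covol M * (4 * (|planeDet x y| + |planeDet y z| + |planeDet z x|)) ≤
        (width K (planeDet x) + width K (planeDet y) + width K (planeDet z)) ^ 2 := by
  by_cases hyz : planeDet y z = 0
  · exact exists_isLatticePacking_covol_mul_le_of_planeDet_eq_zero hK hint hxy hyz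
  by_cases hzx : planeDet z x = 0
  · have hyx : planeDet y x ≠ 0 := by rwa [planeDet_swap, neg_ne_zero]
    have hxz : planeDet x z = 0 := by rw [planeDet_swap, hzx, neg_zero]
    obtain ⟨M, hM, hle⟩ := exists_isLatticePacking_covol_mul_le_of_planeDet_eq_zero hK hint hyx hxz
    refine ⟨M, hM, ?_⟩
    rw [planeDet_swap x y, planeDet_swap z x, planeDet_swap y z] at hle
    simp only [abs_neg] at hle
    linarith
  · exact exists_isLatticePacking_covol_mul_le_of_planeDet_ne_zero hK hint hxy hyz hzx

lemma exists_isLatticePacking_covol_mul_volume_zonotope_le (hK : IsBounded K)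
    (hint : (interior K).Nonempty) {v : Fin 3 → Fin 2 → ℝ} (hv : 0 < volume.real (zonotope v)) :
    ∃ M, IsLatticePacking M K ∧
      covol M * volume.real (zonotope v) ≤ (∑ i, width K (planeDet (v i))) ^ 2 := by
  have hvolume : volume.real (zonotope v) = 4 * (|planeDet (v 0) (v 1)| +
      |planeDet (v 1) (v 2)| + |planeDet (v 2) (v 0)|) := by
    rw [volume_real_zonotope]
    simp only [Fin.sum_univ_three, planeDet_self, abs_zero]
    rw [planeDet_swap (v 0) (v 1), planeDet_swap (v 1) (v 2), planeDet_swap (v 2) (v 0)]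
    simp only [abs_neg]
    ring
  have hne : planeDet (v 0) (v 1) ≠ 0 ∨ planeDet (v 1) (v 2) ≠ 0 ∨ planeDet (v 2) (v 0) ≠ 0 := by
    by_contra! h
    simp [hvolume, h] at hv
  rw [hvolume, Fin.sum_univ_three]
  rcases hne with h | h | h
  · exact exists_isLatticePacking_covol_mul_le hK hint h (v 2)
  · obtain ⟨M, hM, hle⟩ := exists_isLatticePacking_covol_mul_le hK hint h (v 0)
    exact ⟨M, hM, by convert hle using 2 <;> ring⟩
  · obtain ⟨M, hM, hle⟩ := exists_isLatticePacking_covol_mul_le hK hint h (v 1)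
    exact ⟨M, hM, by convert hle using 2 <;> ring⟩

end LatticeConstruction

theorem mixedArea_ge_of_symmHexagon_general (C H : Set (Fin 2 → ℝ))
    (hCcompact : IsCompact C) (hCconv : Convex ℝ C) (hCint : (interior C).Nonempty)
    (hH : IsSymmHexagon H ∨ IsParallelogram H) :
    ∃ M : Matrix (Fin 2) (Fin 2) ℝ, IsLatticePacking M C ∧
      covol M ≤ (mixedArea C H) ^ 2 / (volume H).toReal := by
  have hcol : ¬ Collinear ℝ H := by
    rcases hH with ⟨_, -, h⟩ | ⟨_, _, -, h⟩ <;> exact h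
  obtain ⟨v, rfl⟩ : ∃ v : Fin 3 → Fin 2 → ℝ, H = zonotope v :=
    hH.elim IsSymmHexagon.exists_eq_zonotope IsParallelogram.exists_eq_zonotope
  have hvolume : 0 < volume.real (zonotope v) :=
    volume_real_pos_of_not_collinear (isCompact_sum_segment _ v) (absConvex_zonotope v).2 hcol
  obtain ⟨M, hM, hle⟩ :=
    exists_isLatticePacking_covol_mul_volume_zonotope_le hCcompact.isBounded hCint hvolume
  refine ⟨M, hM, ?_⟩
  rw [mixedArea_zonotope hCcompact hCconv (hCint.mono interior_subset)]
  exact (le_div_iff₀ hvolume).2 hle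

/-- For a centrally symmetric planar convex body `C` and a centrally symmetric
convex hexagon or parallelogram `H`, there is a lattice packing of `C` with
covolume at most `(C,H)² / |H|`; equivalently `(C,H) ≥ √(|C||H|/δ_L(C))`. -/
theorem mixedArea_ge_of_symmHexagon (C H : Set (Fin 2 → ℝ))
    (hCcompact : IsCompact C) (hCconv : Convex ℝ C)
    (hCint : (interior C).Nonempty) (hCsymm : C = -C)
    (hH : IsSymmHexagon H ∨ IsParallelogram H) :
    ∃ M : Matrix (Fin 2) (Fin 2) ℝ, IsLatticePacking M C ∧
      covol M ≤ (mixedArea C H) ^ 2 / (volume H).toReal :=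
  mixedArea_ge_of_symmHexagon_general C H hCcompact hCconv hCint hH
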